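/- arXiv:2602.14487 — 2 statements merged into one kernel-verified Lean document; each statement's English description precedes it below -/
import Mathlib

section
/- The series ∑_{k≥0} C(2k, k) / (4^k · (2k+1)) converges and its sum equals π/2, where C(2k, k) denotes the central binomial coefficient. -/
open Real

/-!
Termwise integration of the binomial series `∑ C(2k, k) t²ᵏ / 4ᵏ = 1 / √(1 - t²)` from `0` to `x`
gives the Taylor series of `arcsin`. Its terms are nonnegative and `1 / √(1 - t²)` is integrable up
to `±1`, so the interchange of sum and integral, and with it the expansion of `arcsin x`, remains
valid at the endpoints `x = ±1`, where Abel's theorem would otherwise be needed.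
-/

open Set MeasureTheory

lemma succ_nsmul_multichoose_succ {R : Type*} [NonAssocSemiring R] [Pow R ℕ] [NatPowAssoc R]
    [BinomialRing R] (r : R) (n : ℕ) :
    (n + 1) • Ring.multichoose r (n + 1) = Ring.multichoose r n * (r + n) := by
  have := BinomialRing.toIsAddTorsionFree (R := R)
  apply nsmul_right_injective n.factorial_ne_zero
  calc n.factorial • (n + 1) • Ring.multichoose r (n + 1)
      = (ascPochhammer ℕ (n + 1)).smeval r := by
        rw [← mul_smul, mul_comm, ← Nat.factorial_succ,
          Ring.factorial_nsmul_multichoose_eq_ascPochhammer]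
    _ = (ascPochhammer ℕ n).smeval r * (r + n) := by
        simp [ascPochhammer_succ_right, Polynomial.smeval_mul, Polynomial.smeval_add,
          Polynomial.smeval_X, Polynomial.smeval_natCast]
    _ = n.factorial • (Ring.multichoose r n * (r + n)) := by
        rw [← Ring.factorial_nsmul_multichoose_eq_ascPochhammer, smul_mul_assoc]

lemma multichoose_one_half {K : Type*} [Field K] [CharZero K] (n : ℕ) :
    Ring.multichoose (1 / 2 : K) n = n.centralBinom / 4 ^ n := by
  induction n with
  | zero => simp
  | succ n ih =>
    have hcb : ((n : K) + 1) * (n + 1).centralBinom = 2 * (2 * n + 1) * n.centralBinom :=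
      mod_cast Nat.succ_mul_centralBinom_succ n
    have hmc := succ_nsmul_multichoose_succ (1 / 2 : K) n
    rw [ih, nsmul_eq_mul, Nat.cast_add_one] at hmc
    apply mul_left_cancel₀ (n.cast_add_one_ne_zero : (n : K) + 1 ≠ 0)
    rw [hmc, mul_div_assoc', hcb]
    field

lemma hasSum_centralBinom_mul_pow {x : ℝ} (hx : |x| < 1 / 4) :
    HasSum (fun n : ℕ => n.centralBinom * x ^ n) (1 / √(1 - 4 * x)) := by
  have hball : 4 * x ∈ Metric.eball (0 : ℝ) 1 := by
    rw [← ENNReal.ofReal_one, Metric.eball_ofReal, mem_ball_zero_iff, norm_eq_abs, abs_mul,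
      abs_of_pos four_pos]
    linarith
  have h := (one_div_one_sub_rpow_hasFPowerSeriesOnBall_zero (1 / 2)).hasSum hball
  simp only [FormalMultilinearSeries.ofScalars_apply_eq, ← Ring.multichoose_eq,
    multichoose_one_half, smul_eq_mul, zero_add, ← sqrt_eq_rpow] at h
  refine h.congr_fun fun n => ?_
  field

lemma hasSum_centralBinom_div_four_pow_mul_pow {t : ℝ} (ht : |t| < 1) :
    HasSum (fun k : ℕ => k.centralBinom / 4 ^ k * t ^ (2 * k)) (1 / √(1 - t ^ 2)) := by
  have hsq : |t ^ 2 / 4| < 1 / 4 := by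
    rw [abs_of_nonneg (by positivity)]
    linarith [(sq_lt_one_iff_abs_lt_one t).2 ht]
  convert hasSum_centralBinom_mul_pow hsq using 2 with k
  · rw [div_pow, ← pow_mul]
    ring
  · ring_nf

section Integrals

variable {a b : ℝ}

lemma hasSum_intervalIntegral_of_nonneg {ι : Type*} [Countable ι] {μ : Measure ℝ}
    {F : ι → ℝ → ℝ} {f : ℝ → ℝ}
    (hF_meas : ∀ i, AEStronglyMeasurable (F i) (μ.restrict (uIoc a b)))
    (hF_nonneg : ∀ i, ∀ᵐ t ∂μ, t ∈ uIoc a b → 0 ≤ F i t)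
    (hf : IntervalIntegrable f μ a b)
    (h_lim : ∀ᵐ t ∂μ, t ∈ uIoc a b → HasSum (fun i => F i t) (f t)) :
    HasSum (fun i => ∫ t in a..b, F i t ∂μ) (∫ t in a..b, f t ∂μ) := by
  refine intervalIntegral.hasSum_integral_of_dominated_convergence F hF_meas ?_ ?_ ?_ h_lim
  · intro i
    filter_upwards [hF_nonneg i] with t ht hmem
    exact (norm_of_nonneg (ht hmem)).le
  · filter_upwards [h_lim] with t ht hmem
    exact (ht hmem).summable
  · refine hf.congr_ae ((ae_restrict_iff' measurableSet_uIoc).2 ?_)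
    filter_upwards [h_lim] with t ht hmem
    exact (ht hmem).tsum_eq.symm

lemma hasDerivAt_arcsin_of_mem_Ioo_min_max (ha : a ∈ Icc (-1) 1) (hb : b ∈ Icc (-1) 1)
    {t : ℝ} (ht : t ∈ Ioo (min a b) (max a b)) : HasDerivAt arcsin (1 / √(1 - t ^ 2)) t :=
  hasDerivAt_arcsin ((le_min ha.1 hb.1).trans_lt ht.1).ne' (ht.2.trans_le (max_le ha.2 hb.2)).ne

lemma intervalIntegrable_one_div_sqrt_one_sub_sq (ha : a ∈ Icc (-1) 1) (hb : b ∈ Icc (-1) 1) :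
    IntervalIntegrable (fun t => 1 / √(1 - t ^ 2)) volume a b :=
  intervalIntegral.intervalIntegrable_deriv_of_nonneg continuous_arcsin.continuousOn
    (fun _ => hasDerivAt_arcsin_of_mem_Ioo_min_max ha hb) fun _ _ => by positivity

lemma integral_one_div_sqrt_one_sub_sq (ha : a ∈ Icc (-1) 1) (hb : b ∈ Icc (-1) 1) :
    ∫ t in a..b, 1 / √(1 - t ^ 2) = arcsin b - arcsin a :=
  intervalIntegral.integral_eq_sub_of_hasDeriv_right continuous_arcsin.continuousOn
    (fun _ ht => (hasDerivAt_arcsin_of_mem_Ioo_min_max ha hb ht).hasDerivWithinAt)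
    (intervalIntegrable_one_div_sqrt_one_sub_sq ha hb)

end Integrals

lemma hasSum_arcsin {x : ℝ} (hx : x ∈ Icc (-1) 1) :
    HasSum (fun k : ℕ => k.centralBinom / (4 ^ k * (2 * k + 1)) * x ^ (2 * k + 1)) (arcsin x) := by
  have h0 : (0 : ℝ) ∈ Icc (-1) 1 := by simp
  have h_lim : ∀ᵐ t : ℝ, t ∈ uIoc 0 x →
      HasSum (fun k : ℕ => k.centralBinom / 4 ^ k * t ^ (2 * k)) (1 / √(1 - t ^ 2)) := by
    filter_upwards [Measure.ae_ne volume 1] with t ht hmem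
    have hlower : -1 < t := (le_min h0.1 hx.1).trans_lt hmem.1
    have hupper : t < 1 := (hmem.2.trans (max_le h0.2 hx.2)).lt_of_ne ht
    exact hasSum_centralBinom_div_four_pow_mul_pow (abs_lt.2 ⟨hlower, hupper⟩)
  have h := hasSum_intervalIntegral_of_nonneg
    (fun k => Continuous.aestronglyMeasurable (by fun_prop))
    (fun k => .of_forall fun t _ => mul_nonneg (by positivity) ((even_two_mul k).pow_nonneg t))
    (intervalIntegrable_one_div_sqrt_one_sub_sq h0 hx) h_lim
  rw [integral_one_div_sqrt_one_sub_sq h0 hx, arcsin_zero, sub_zero] at h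
  refine h.congr_fun fun k => ?_
  rw [intervalIntegral.integral_const_mul, integral_pow, zero_pow (2 * k).succ_ne_zero, sub_zero]
  push_cast
  field

/-- The series ∑_{k≥0} C(2k, k) / (4ᵏ · (2k+1)) converges with sum π/2. -/
theorem central_binom_series_pi_div_two :
    Summable (fun k : ℕ => ((2 * k).choose k : ℝ) / (4 ^ k * (2 * k + 1))) ∧
    ∑' k : ℕ, ((2 * k).choose k : ℝ) / (4 ^ k * (2 * k + 1)) = π / 2 := by
  have h : HasSum (fun k : ℕ => ((2 * k).choose k : ℝ) / (4 ^ k * (2 * k + 1))) (π / 2) := by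
    simpa [Nat.centralBinom_eq_two_mul_choose] using hasSum_arcsin (x := 1) (by simp)
  exact ⟨h.summable, h.tsum_eq⟩
end

section
/- The expectation of H_τ/τ is given by the series E[H_τ/τ] = ∑_{k≥0} (1/(2·4^k)) · (C(2k, k)/(k+1)) · ((k+1)/(2k+1)) = (1/2) ∑_{k≥0} C(2k, k)/(4^k · (2k+1)). -/
open MeasureTheory ProbabilityTheory
open scoped Classical

/-!
A path of `±1` steps satisfies `S_n = 2 H_n - n`, so `S_τ = 1` forces `H_τ / τ = (τ + 1) / (2 τ)`;
the expectation only needs the law of `τ`. Conditioning on the last step shows that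
`P(S_j < a for all j ≤ n, S_n = x)` and `P(S_n = x) - P(S_n = 2 a - x)` obey the same recursion in
`n`, and both vanish on the barrier `x = a`: this is the reflection principle. With `a = 1` and the
binomial law of `S_n` it gives `P(τ = 2 k + 1) = C(2k, k) / (k + 1) / (2 * 4 ^ k)`.
-/

section Path

/-- The position after `n` steps of the walk on `ℤ` started at `0` with steps `x 0, x 1, …`. -/
def walk (x : ℕ → ℤ) (n : ℕ) : ℤ := ∑ i ∈ Finset.range n, x i

/-- The number of heads (steps equal to `1`) among the first `n` steps. -/
def headCount (x : ℕ → ℤ) (n : ℕ) : ℕ := ((Finset.range n).filter (fun i => x i = 1)).card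

/-- The first time `n ≥ 1` at which the walk is at `a`; the value `0` means that it never is. -/
noncomputable def firstPassage (x : ℕ → ℤ) (a : ℤ) : ℕ := sInf {n | 1 ≤ n ∧ walk x n = a}

/-- The walk stays strictly below the barrier `a` up to and including time `n`. -/
def StaysBelow (x : ℕ → ℤ) (a : ℤ) (n : ℕ) : Prop := ∀ j ≤ n, walk x j < a

/-- A path of a simple walk, all of whose steps are `±1`. -/
def IsSimplePath (x : ℕ → ℤ) : Prop := ∀ i, x i = 1 ∨ x i = -1

variable {x : ℕ → ℤ} {a : ℤ} {n : ℕ}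

@[simp]
lemma walk_zero (x : ℕ → ℤ) : walk x 0 = 0 := Finset.sum_range_zero x

lemma walk_succ (x : ℕ → ℤ) (n : ℕ) : walk x (n + 1) = walk x n + x n := Finset.sum_range_succ x n

lemma staysBelow_zero_iff : StaysBelow x a 0 ↔ 0 < a := by simp [StaysBelow]

lemma staysBelow_succ_iff : StaysBelow x a (n + 1) ↔ StaysBelow x a n ∧ walk x (n + 1) < a := by
  simp only [StaysBelow, Nat.le_succ_iff, or_imp, forall_and, forall_eq]

lemma headCount_le (x : ℕ → ℤ) (n : ℕ) : headCount x n ≤ n :=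
  (Finset.card_filter_le _ _).trans_eq (Finset.card_range n)

lemma IsSimplePath.le_one (hx : IsSimplePath x) (i : ℕ) : x i ≤ 1 := by
  rcases hx i with h | h <;> omega

lemma IsSimplePath.walk_eq_two_mul_headCount_sub (hx : IsSimplePath x) (n : ℕ) :
    walk x n = 2 * headCount x n - n := by
  induction n with
  | zero => simp [headCount]
  | succ n ih =>
    rw [walk_succ, ih, headCount, headCount, Finset.range_add_one, Finset.filter_insert]
    rcases hx n with h | h
    · rw [if_pos h, Finset.card_insert_of_notMem (by simp)]
      push_cast
      omega
    · rw [if_neg (by omega)]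
      push_cast
      omega

lemma staysBelow_of_forall_walk_ne (hx : ∀ i, x i ≤ 1) (ha : 0 < a)
    (hne : ∀ j, 1 ≤ j → j ≤ n → walk x j ≠ a) : StaysBelow x a n := by
  induction n with
  | zero => exact staysBelow_zero_iff.2 ha
  | succ n ih =>
    have hbelow := ih fun j hj hjn => hne j hj (by omega)
    refine staysBelow_succ_iff.2 ⟨hbelow, lt_of_le_of_ne ?_ (hne (n + 1) (by omega) le_rfl)⟩
    rw [walk_succ]
    linarith [hbelow n le_rfl, hx n]

lemma walk_firstPassage (h : firstPassage x a ≠ 0) : walk x (firstPassage x a) = a :=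
  (Nat.sInf_mem (Nat.nonempty_of_pos_sInf (Nat.pos_of_ne_zero h))).2

lemma firstPassage_eq_succ_iff (hx : ∀ i, x i ≤ 1) (ha : 0 < a) :
    firstPassage x a = n + 1 ↔ StaysBelow x a n ∧ walk x (n + 1) = a := by
  constructor
  · intro h
    refine ⟨staysBelow_of_forall_walk_ne hx ha fun j hj hjn hja => ?_, ?_⟩
    · have : firstPassage x a ≤ j := Nat.sInf_le ⟨hj, hja⟩
      omega
    · rw [← h]
      exact walk_firstPassage (by omega)
  · rintro ⟨hbelow, hwalk⟩
    refine IsLeast.csInf_eq ⟨⟨by omega, hwalk⟩, fun j ⟨_, hja⟩ => ?_⟩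
    by_contra! hlt
    exact (hbelow j (by omega)).ne hja

lemma IsSimplePath.two_mul_headCount_firstPassage (hx : IsSimplePath x)
    (h : firstPassage x a ≠ 0) :
    2 * (headCount x (firstPassage x a) : ℤ) = firstPassage x a + a := by
  have hwalk := hx.walk_eq_two_mul_headCount_sub (firstPassage x a)
  rw [walk_firstPassage h] at hwalk
  omega

lemma IsSimplePath.odd_firstPassage_one (hx : IsSimplePath x) (h : firstPassage x 1 ≠ 0) :
    Odd (firstPassage x 1) := by
  have hheads := hx.two_mul_headCount_firstPassage h
  exact ⟨headCount x (firstPassage x 1) - 1, by omega⟩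

lemma IsSimplePath.headCount_firstPassage_div (hx : IsSimplePath x) (a : ℤ) :
    (headCount x (firstPassage x a) : ℝ) / firstPassage x a =
      (firstPassage x a + a) / (2 * firstPassage x a) := by
  rcases eq_or_ne (firstPassage x a) 0 with h | h
  · simp [h]
  · have hheads : 2 * (headCount x (firstPassage x a) : ℝ) = firstPassage x a + a :=
      mod_cast hx.two_mul_headCount_firstPassage h
    rw [← hheads, mul_div_mul_left _ _ two_ne_zero]

end Path

section Measurability

variable {Ω β : Type*} [MeasurableSpace β]

/-- The σ-algebra generated by `X 0, …, X (n - 1)`. -/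
@[reducible]
def past (X : ℕ → Ω → β) (n : ℕ) : MeasurableSpace Ω :=
  ⨆ i ∈ Set.Iio n, MeasurableSpace.comap (X i) inferInstance

lemma measurable_past (X : ℕ → Ω → β) {i n : ℕ} (hi : i < n) : Measurable[past X n] (X i) :=
  (comap_measurable (X i)).mono (le_iSup₂_of_le i hi le_rfl) le_rfl

lemma measurable_past_walk (X : ℕ → Ω → ℤ) {j n : ℕ} (hj : j ≤ n) :
    Measurable[past X n] fun ω => walk (X · ω) j :=
  Finset.measurable_fun_sum _ fun _ hi =>
    measurable_past X ((Finset.mem_range.1 hi).trans_le hj)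

lemma measurableSet_past_staysBelow (X : ℕ → Ω → ℤ) (a : ℤ) (n : ℕ) :
    MeasurableSet[past X n] {ω | StaysBelow (X · ω) a n} := by
  simp only [StaysBelow, Set.ofPred_forall]
  exact MeasurableSet.iInter fun j => MeasurableSet.iInter fun hj =>
    measurable_past_walk X hj measurableSet_Iio

variable [mΩ : MeasurableSpace Ω]

lemma past_le {X : ℕ → Ω → β} (hX : ∀ i, Measurable (X i)) (n : ℕ) : past X n ≤ mΩ :=
  iSup₂_le fun i _ => (hX i).comap_le

lemma indep_past {P : Measure Ω} {X : ℕ → Ω → β} (hX : ∀ i, Measurable (X i))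
    (hindep : iIndepFun X P) (n : ℕ) :
    Indep (past X n) (MeasurableSpace.comap (X n) inferInstance) P := by
  have h := indep_iSup_of_disjoint (fun i => (hX i).comap_le) hindep
    (Set.disjoint_singleton_right.2 (Set.self_notMem_Iio (a := n)))
  rwa [iSup_singleton] at h

lemma measurable_walk {X : ℕ → Ω → ℤ} (hX : ∀ i, Measurable (X i)) (n : ℕ) :
    Measurable fun ω => walk (X · ω) n :=
  (measurable_past_walk X le_rfl).mono (past_le hX n) le_rfl

lemma measurable_sInf_nat {s : Ω → Set ℕ} (hs : ∀ n, MeasurableSet {ω | n ∈ s ω}) :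
    Measurable fun ω => sInf (s ω) := by
  refine measurable_of_Iic fun n => ?_
  have hle : ∀ ω, sInf (s ω) ≤ n ↔ (∃ m ≤ n, m ∈ s ω) ∨ ∀ m, m ∉ s ω := by
    intro ω
    rcases (s ω).eq_empty_or_nonempty with h | h
    · simp [h]
    · exact ⟨fun hn => Or.inl ⟨_, hn, Nat.sInf_mem h⟩, fun hn => hn.elim
        (fun ⟨m, hmn, hm⟩ => (Nat.sInf_le hm).trans hmn) fun hm => absurd h.some_mem (hm _)⟩
  have hset : (fun ω => sInf (s ω)) ⁻¹' Set.Iic n =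
      (⋃ m ≤ n, {ω | m ∈ s ω}) ∪ ⋂ m, {ω | m ∈ s ω}ᶜ := by
    ext ω
    simp [hle]
  rw [hset]
  exact (MeasurableSet.iUnion fun m => MeasurableSet.iUnion fun _ => hs m).union
    (MeasurableSet.iInter fun m => (hs m).compl)

lemma measurable_firstPassage {X : ℕ → Ω → ℤ} (hX : ∀ i, Measurable (X i)) (a : ℤ) :
    Measurable fun ω => firstPassage (X · ω) a :=
  measurable_sInf_nat fun n =>
    (MeasurableSet.const (1 ≤ n)).inter (measurable_walk hX n (measurableSet_singleton a))

lemma integral_comp_eq_tsum {ι E : Type*} [Countable ι] [MeasurableSpace ι]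
    [MeasurableSingletonClass ι] [NormedAddCommGroup E] [NormedSpace ℝ E] [CompleteSpace E]
    {P : Measure Ω} {τ : Ω → ι} (hτ : Measurable τ) {g : ι → E}
    (hg : Integrable (fun ω => g (τ ω)) P) :
    ∫ ω, g (τ ω) ∂P = ∑' i, P.real {ω | τ ω = i} • g i := by
  have hg_map : Integrable g (P.map τ) :=
    (integrable_map_measure .of_discrete hτ.aemeasurable).2 hg
  rw [← integral_map hτ.aemeasurable .of_discrete, integral_countable hg_map]
  exact tsum_congr fun i => by rw [map_measureReal_apply hτ (measurableSet_singleton i)]; rfl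

end Measurability

/-- The steps `X 0, X 1, …` are independent fair coin tosses with values `±1`. -/
structure IsFairCoinTossing {Ω : Type*} [MeasurableSpace Ω] (X : ℕ → Ω → ℤ) (P : Measure Ω) :
    Prop where
  measurable : ∀ i, Measurable (X i)
  indep : iIndepFun X P
  heads : ∀ i, P {ω | X i ω = 1} = 1 / 2
  tails : ∀ i, P {ω | X i ω = -1} = 1 / 2

namespace IsFairCoinTossing

variable {Ω : Type*} [MeasurableSpace Ω] {P : Measure Ω} {X : ℕ → Ω → ℤ}

lemma isProbabilityMeasure (h : IsFairCoinTossing X P) : IsProbabilityMeasure P :=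
  h.indep.isProbabilityMeasure

lemma ae_isSimplePath (h : IsFairCoinTossing X P) : ∀ᵐ ω ∂P, IsSimplePath (X · ω) := by
  have := h.isProbabilityMeasure
  refine ae_all_iff.2 fun i => ?_
  have hheads : MeasurableSet {ω | X i ω = 1} := h.measurable i (measurableSet_singleton 1)
  have htails : MeasurableSet {ω | X i ω = -1} := h.measurable i (measurableSet_singleton (-1))
  have hdisj : Disjoint {ω | X i ω = 1} {ω | X i ω = -1} :=
    Set.disjoint_left.2 fun ω (h₁ : X i ω = 1) (h₂ : X i ω = -1) => by omega
  refine (prob_compl_eq_zero_iff (hheads.union htails)).2 ?_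
  rw [measure_union hdisj htails, h.heads, h.tails, ENNReal.add_halves]

lemma measureReal_inter_step (h : IsFairCoinTossing X P) {n : ℕ} {A : Set Ω}
    (hA : MeasurableSet[past X n] A) {c : ℤ} (hc : c = 1 ∨ c = -1) :
    P.real (A ∩ {ω | X n ω = c}) = P.real A / 2 := by
  have hindep : P (A ∩ X n ⁻¹' {c}) = P A * P (X n ⁻¹' {c}) :=
    (Indep_iff _ _ P).1 (indep_past h.measurable h.indep n) A _ hA
      ⟨{c}, measurableSet_singleton c, rfl⟩
  have hhalf : P (X n ⁻¹' {c}) = 1 / 2 := by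
    rcases hc with rfl | rfl
    exacts [h.heads n, h.tails n]
  change (P (A ∩ X n ⁻¹' {c})).toReal = (P A).toReal / 2
  rw [hindep, hhalf, ENNReal.toReal_mul]
  norm_num [div_eq_mul_inv]

lemma measureReal_inter_walk_succ (h : IsFairCoinTossing X P) {n : ℕ} {A : Set Ω}
    (hA : MeasurableSet[past X n] A) (x : ℤ) :
    P.real (A ∩ {ω | walk (X · ω) (n + 1) = x}) =
      (P.real (A ∩ {ω | walk (X · ω) n = x - 1}) +
        P.real (A ∩ {ω | walk (X · ω) n = x + 1})) / 2 := by
  have := h.isProbabilityMeasure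
  have hmeas : ∀ y, MeasurableSet[past X n] (A ∩ {ω | walk (X · ω) n = y}) := fun y =>
    hA.inter (measurable_past_walk X le_rfl (measurableSet_singleton y))
  have hsplit : (A ∩ {ω | walk (X · ω) (n + 1) = x} : Set Ω) =ᵐ[P]
      ((A ∩ {ω | walk (X · ω) n = x - 1} ∩ {ω | X n ω = 1}) ∪
        (A ∩ {ω | walk (X · ω) n = x + 1} ∩ {ω | X n ω = -1}) : Set Ω) := by
    refine Filter.eventuallyEq_set.2 ?_
    filter_upwards [h.ae_isSimplePath] with ω hω
    simp only [Set.mem_union, Set.mem_inter_iff, Set.mem_ofPred_eq, walk_succ]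
    have := hω n
    grind
  have hdisj : Disjoint (A ∩ {ω | walk (X · ω) n = x - 1} ∩ {ω | X n ω = 1})
      (A ∩ {ω | walk (X · ω) n = x + 1} ∩ {ω | X n ω = -1}) :=
    Set.disjoint_left.2 fun ω ⟨_, (h₁ : X n ω = 1)⟩ ⟨_, (h₂ : X n ω = -1)⟩ => by omega
  have htails : MeasurableSet (A ∩ {ω | walk (X · ω) n = x + 1} ∩ {ω | X n ω = -1}) :=
    (past_le h.measurable n _ (hmeas _)).inter (h.measurable n (measurableSet_singleton (-1)))
  rw [measureReal_congr hsplit, measureReal_union hdisj htails,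
    h.measureReal_inter_step (hmeas _) (Or.inl rfl),
    h.measureReal_inter_step (hmeas _) (Or.inr rfl), add_div]

lemma measureReal_walk_succ (h : IsFairCoinTossing X P) (n : ℕ) (x : ℤ) :
    P.real {ω | walk (X · ω) (n + 1) = x} =
      (P.real {ω | walk (X · ω) n = x - 1} + P.real {ω | walk (X · ω) n = x + 1}) / 2 := by
  simpa only [Set.univ_inter] using h.measureReal_inter_walk_succ MeasurableSet.univ x

lemma measureReal_walk_eq_two_mul_sub (h : IsFairCoinTossing X P) (n k : ℕ) :
    P.real {ω | walk (X · ω) n = 2 * k - n} = n.choose k / 2 ^ n := by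
  have := h.isProbabilityMeasure
  induction n generalizing k with
  | zero =>
    rcases eq_or_ne k 0 with rfl | hk
    · simp
    · have hne : (0 : ℤ) ≠ 2 * k := by omega
      simp [Nat.choose_eq_zero_of_lt (Nat.pos_of_ne_zero hk), hne]
  | succ n ih =>
    rw [h.measureReal_walk_succ, Nat.cast_add_one,
      show (2 * k - (n + 1) + 1 : ℤ) = 2 * k - n by ring, ih k]
    cases k with
    | zero =>
      have hnull : P.real {ω | walk (X · ω) n = 2 * (0 : ℕ) - (n + 1) - 1} = 0 := by
        refine (measureReal_eq_zero_iff).2 (measure_eq_zero_iff_ae_notMem.2 ?_)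
        filter_upwards [h.ae_isSimplePath] with ω hω (hwalk : walk (X · ω) n = _)
        have := hω.walk_eq_two_mul_headCount_sub n
        omega
      rw [hnull, Nat.choose_zero_right, Nat.choose_zero_right]
      ring
    | succ k =>
      rw [show (2 * ((k + 1 : ℕ) : ℤ) - (n + 1) - 1) = 2 * k - n by push_cast; ring, ih k,
        Nat.choose_succ_succ]
      push_cast
      ring

lemma measureReal_staysBelow_inter_walk (h : IsFairCoinTossing X P) {a x : ℤ} (ha : 0 < a)
    (hx : x ≤ a) (n : ℕ) :
    P.real ({ω | StaysBelow (X · ω) a n} ∩ {ω | walk (X · ω) n = x}) =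
      P.real {ω | walk (X · ω) n = x} - P.real {ω | walk (X · ω) n = 2 * a - x} := by
  induction n generalizing x with
  | zero =>
    have hne : 0 ≠ 2 * a - x := by omega
    simp [staysBelow_zero_iff, ha, hne]
  | succ n ih =>
    rcases hx.eq_or_lt with rfl | hlt
    · have hempty : {ω | StaysBelow (X · ω) x (n + 1)} ∩ {ω | walk (X · ω) (n + 1) = x} = ∅ :=
        Set.eq_empty_of_forall_notMem fun ω ⟨hbelow, hwalk⟩ => (hbelow _ le_rfl).ne hwalk
      rw [hempty, measureReal_empty, two_mul, add_sub_cancel_right, sub_self]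
    · have hdrop : {ω | StaysBelow (X · ω) a (n + 1)} ∩ {ω | walk (X · ω) (n + 1) = x} =
          {ω | StaysBelow (X · ω) a n} ∩ {ω | walk (X · ω) (n + 1) = x} := by
        ext ω
        simp only [Set.mem_inter_iff, Set.mem_ofPred_eq, staysBelow_succ_iff]
        grind
      rw [hdrop, h.measureReal_inter_walk_succ (measurableSet_past_staysBelow X a n),
        ih (by omega), ih (by omega), h.measureReal_walk_succ, h.measureReal_walk_succ,
        show 2 * a - (x - 1) = 2 * a - x + 1 by ring, show 2 * a - (x + 1) = 2 * a - x - 1 by ring]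
      ring

lemma measureReal_firstPassage_eq_succ (h : IsFairCoinTossing X P) {a : ℤ} (ha : 0 < a) (n : ℕ) :
    P.real {ω | firstPassage (X · ω) a = n + 1} =
      (P.real {ω | walk (X · ω) n = a - 1} - P.real {ω | walk (X · ω) n = a + 1}) / 2 := by
  have hevent : {ω | firstPassage (X · ω) a = n + 1} =ᵐ[P]
      ({ω | StaysBelow (X · ω) a n} ∩ {ω | walk (X · ω) (n + 1) = a} : Set Ω) := by
    refine Filter.eventuallyEq_set.2 ?_
    filter_upwards [h.ae_isSimplePath] with ω hω
    exact firstPassage_eq_succ_iff hω.le_one ha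
  have hempty : {ω | StaysBelow (X · ω) a n} ∩ {ω | walk (X · ω) n = a + 1} = ∅ :=
    Set.eq_empty_of_forall_notMem fun ω ⟨hbelow, hwalk⟩ => by
      have : walk (X · ω) n < a := hbelow n le_rfl
      simp only [Set.mem_ofPred_eq] at hwalk
      omega
  rw [measureReal_congr hevent, h.measureReal_inter_walk_succ (measurableSet_past_staysBelow X a n),
    hempty, measureReal_empty, add_zero, h.measureReal_staysBelow_inter_walk ha (by omega),
    show 2 * a - (a - 1) = a + 1 by ring]

lemma measureReal_firstPassage_one_eq_two_mul_add_one (h : IsFairCoinTossing X P) (k : ℕ) :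
    P.real {ω | firstPassage (X · ω) 1 = 2 * k + 1} =
      1 / (2 * 4 ^ k) * ((2 * k).choose k / (k + 1)) := by
  have hchoose : ((2 * k).choose (k + 1) : ℝ) * (k + 1) = (2 * k).choose k * k := by
    have := Nat.choose_succ_right_eq (2 * k) k
    rw [show 2 * k - k = k by omega] at this
    exact_mod_cast this
  have hwalk_zero : P.real {ω | walk (X · ω) (2 * k) = 1 - 1} = (2 * k).choose k / 4 ^ k := by
    rw [show (1 - 1 : ℤ) = 2 * k - (2 * k : ℕ) by push_cast; ring,
      h.measureReal_walk_eq_two_mul_sub, pow_mul]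
    norm_num
  have hwalk_two :
      P.real {ω | walk (X · ω) (2 * k) = 1 + 1} = (2 * k).choose (k + 1) / 4 ^ k := by
    rw [show (1 + 1 : ℤ) = 2 * (k + 1 : ℕ) - (2 * k : ℕ) by push_cast; ring,
      h.measureReal_walk_eq_two_mul_sub, pow_mul]
    norm_num
  rw [h.measureReal_firstPassage_eq_succ one_pos, hwalk_zero, hwalk_two]
  field_simp
  linarith

lemma integral_headCount_firstPassage_div (h : IsFairCoinTossing X P) (a : ℤ) :
    ∫ ω, (headCount (X · ω) (firstPassage (X · ω) a) : ℝ) / firstPassage (X · ω) a ∂P =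
      ∑' n : ℕ, P.real {ω | firstPassage (X · ω) a = n} * ((n + a) / (2 * n)) := by
  have := h.isProbabilityMeasure
  have hτ : Measurable fun ω => firstPassage (X · ω) a := measurable_firstPassage h.measurable a
  let g : ℕ → ℝ := fun n => (n + a) / (2 * n)
  have hratio : ∀ᵐ ω ∂P,
      (headCount (X · ω) (firstPassage (X · ω) a) : ℝ) / firstPassage (X · ω) a =
        g (firstPassage (X · ω) a) := by
    filter_upwards [h.ae_isSimplePath] with ω hω using hω.headCount_firstPassage_div a
  have hint : Integrable (fun ω => g (firstPassage (X · ω) a)) P := by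
    refine Integrable.of_bound
      ((measurable_of_countable g).comp hτ).aestronglyMeasurable 1 ?_
    filter_upwards [hratio] with ω hω
    rw [← hω, Real.norm_of_nonneg (by positivity)]
    exact div_le_one_of_le₀ (Nat.cast_le.2 (headCount_le _ _)) (Nat.cast_nonneg _)
  rw [integral_congr_ae hratio, integral_comp_eq_tsum hτ hint]
  rfl

lemma integral_headCount_firstPassage_one_div (h : IsFairCoinTossing X P) :
    ∫ ω, (headCount (X · ω) (firstPassage (X · ω) 1) : ℝ) / firstPassage (X · ω) 1 ∂P =
      ∑' k : ℕ, (1 / (2 * 4 ^ k)) * (((2 * k).choose k : ℝ) / (k + 1)) *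
        ((k + 1) / (2 * k + 1)) := by
  let f : ℕ → ℝ := fun n =>
    P.real {ω | firstPassage (X · ω) 1 = n} * ((n + (1 : ℤ)) / (2 * n))
  have hodd : Function.support f ⊆ Set.range fun k : ℕ => 2 * k + 1 := by
    intro n hn
    have hn₀ : n ≠ 0 := fun hn₀ => hn (by simp [f, hn₀])
    by_contra hrange
    have hnull : P {ω | firstPassage (X · ω) 1 = n} = 0 := by
      refine measure_eq_zero_iff_ae_notMem.2 ?_
      filter_upwards [h.ae_isSimplePath] with ω hω (hτ : firstPassage (X · ω) 1 = n)
      obtain ⟨k, hk⟩ := hω.odd_firstPassage_one (by omega)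
      exact hrange ⟨k, (hτ.symm.trans hk).symm⟩
    exact hn (by simp [f, measureReal_def, hnull])
  have hinj : Function.Injective fun k : ℕ => 2 * k + 1 := fun i j hij => by grind
  calc _ = ∑' n, f n := h.integral_headCount_firstPassage_div 1
    _ = ∑' k : ℕ, f (2 * k + 1) := (hinj.tsum_eq hodd).symm
    _ = _ := tsum_congr fun k => by
      simp only [f]
      rw [h.measureReal_firstPassage_one_eq_two_mul_add_one]
      push_cast
      congr 1
      field_simp
      ring

end IsFairCoinTossing

/-- The expectation of H_τ/τ is given by the series
∑_{k≥0} (1/(2·4ᵏ)) · (C(2k,k)/(k+1)) · ((k+1)/(2k+1)),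
which equals (1/2) ∑_{k≥0} C(2k,k)/(4ᵏ·(2k+1)). -/
theorem expected_proportion_series
{Ω : Type*} [MeasurableSpace Ω] (P : Measure Ω) [IsProbabilityMeasure P]
    (X : ℕ → Ω → ℤ) (hmeas : ∀ i, Measurable (X i))
    (hindep : iIndepFun X P)
    (hheads : ∀ i, P {ω | X i ω = 1} = 1/2)
    (htails : ∀ i, P {ω | X i ω = -1} = 1/2)
    (τ : Ω → ℕ) (hτ : ∀ ω, τ ω = sInf {n | 1 ≤ n ∧ (∑ i ∈ Finset.range n, X i ω) = 1})
(H : ℕ → Ω → ℕ)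
    (hH : ∀ n ω, H n ω = ((Finset.range n).filter (fun i => X i ω = 1)).card) :
    (∫ ω, ((H (τ ω) ω : ℝ) / (τ ω : ℝ)) ∂P =
      ∑' k : ℕ, (1 / (2 * 4 ^ k)) * (((2 * k).choose k : ℝ) / (k + 1)) *
        ((k + 1) / (2 * k + 1))) ∧
    (∑' k : ℕ, (1 / (2 * 4 ^ k)) * (((2 * k).choose k : ℝ) / (k + 1)) *
        ((k + 1) / (2 * k + 1)) =
      (1 / 2) * ∑' k : ℕ, ((2 * k).choose k : ℝ) / (4 ^ k * (2 * k + 1))) := by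
  obtain rfl : τ = fun ω => firstPassage (X · ω) 1 := funext hτ
  obtain rfl : H = fun n ω => headCount (X · ω) n := funext₂ hH
  have hcoin : IsFairCoinTossing X P := ⟨hmeas, hindep, hheads, htails⟩
  refine ⟨hcoin.integral_headCount_firstPassage_one_div, ?_⟩
  rw [← tsum_mul_left]
  exact tsum_congr fun k => by field_simp
end
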